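/- Let p ≥ 2, let a : {0,…,p−1} → ℤ take values in {−1,0,1} with a(0) = 1, and let Θ be the associated 2p×2p rational matrix Θ = (Γ − I)ω as in the context. Suppose Ψ is a (2p−1)×(2p−1) rational matrix and η : ℚ^{2p} → ℚ^{2p−1} is a surjective linear map with one-dimensional kernel such that η ∘ Θ = Ψ ∘ η and Θv = −v for every v ∈ ker η. Then (1 + t)·det(I − tΨ) = (1 − (−1)^p t^p)² + 2(1 − (−1)^p t^p)·u_p(t) as polynomials in ℚ[t]; equivalently, det(I − tΨ) = (1 − (−1)^p t^p)² D(t), where D(t) is the kneading determinant. -/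

import Mathlib

open Polynomial Matrix

/-!
The map `η` has a linear section, and `Θ + 1` kills `ker η`, so `Θ + 1 = U H` factors through the
matrix `H` of `η` while `Ψ + 1 = H U`. Sylvester's determinant identity then compares `det (1 - tΘ)`
with `det (1 - tΨ)` up to a power of `1 + t`.

On the other side, `Γ` is the rank-one matrix `s εᵀ` with `s = (a, -a)` and `ε = (e₀, -e₀)`, so
`1 - tω(Γ - 1)`, which has the same determinant as `1 - tΘ`, commutes with exchanging the two
blocks. Splitting into symmetric and antisymmetric vectors, this determinant is
`det (1 + tσ) * det (1 + tσ - 2t(σa)e₀ᵀ)`. Both factors are evaluated by the row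
`r = (1, -t, t², …)`, which satisfies `r (1 + tN) = e₀ᵀ` for the nilpotent shift `N = σ - eₙe₀ᵀ`.
-/

section Intertwining

theorem one_sub_X_smul_map_smul_one_add {R ι : Type*} [CommRing R] [DecidableEq ι] (c : R)
    (M : Matrix ι ι R) :
    (1 : Matrix ι ι R[X]) - (X : R[X]) • (c • 1 + M).map C =
      (1 - C c * X) • 1 - (X : R[X]) • M.map C := by
  have h : (c • 1 + M).map C = C c • (1 : Matrix ι ι R[X]) + M.map C := by
    ext i j
    rcases eq_or_ne i j with rfl | hij <;> simp [*]
  rw [h]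
  module

variable {R ι κ : Type*} [CommRing R] [Fintype ι] [DecidableEq ι] [Fintype κ] [DecidableEq κ]

theorem det_smul_one_sub_mul_comm_of_card_le (A : Matrix ι κ R) (B : Matrix κ ι R)
    (hle : Fintype.card κ ≤ Fintype.card ι) (x : R) :
    (x • 1 - A * B).det = x ^ (Fintype.card ι - Fintype.card κ) * (x • 1 - B * A).det := by
  simpa [eval_charpoly, smul_one_eq_diagonal] using
    congrArg (eval x) (charpoly_mul_comm_of_le A B hle)

theorem exists_eq_smul_one_add_mul_of_intertwines {Θ : Matrix ι ι R} {Ψ : Matrix κ κ R}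
    {η : (ι → R) →ₗ[R] (κ → R)} {c : R} (hsurj : Function.Surjective η)
    (hcomm : η ∘ₗ Θ.mulVecLin = Ψ.mulVecLin ∘ₗ η)
    (hker : ∀ v ∈ LinearMap.ker η, Θ *ᵥ v = c • v) :
    ∃ (U : Matrix ι κ R) (H : Matrix κ ι R), Θ = c • 1 + U * H ∧ Ψ = c • 1 + H * U := by
  obtain ⟨θ, hθ⟩ := Module.projective_lifting_property η LinearMap.id hsurj
  have η_θ (w : κ → R) : η (θ w) = w := LinearMap.congr_fun hθ w
  have η_Θ (v : ι → R) : η (Θ *ᵥ v) = Ψ *ᵥ η v := LinearMap.congr_fun hcomm v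
  have sub_mem_ker (v : ι → R) : v - θ (η v) ∈ LinearMap.ker η := by
    simp [η_θ]
  have Θ_eq (v : ι → R) : Θ *ᵥ v = c • v + (Θ *ᵥ θ (η v) - c • θ (η v)) := by
    have h := hker _ (sub_mem_ker v)
    rw [mulVec_sub, smul_sub, sub_eq_iff_eq_add] at h
    rw [h]
    abel
  refine ⟨(Θ - c • 1) * LinearMap.toMatrix' θ, LinearMap.toMatrix' η, ?_, ?_⟩
  · refine mulVec_injective (funext fun v ↦ ?_)
    simpa [add_mulVec, sub_mulVec, smul_mulVec, ← mulVec_mulVec, LinearMap.toMatrix'_mulVec]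
      using Θ_eq v
  · refine mulVec_injective (funext fun w ↦ ?_)
    simp [add_mulVec, sub_mulVec, smul_mulVec, ← mulVec_mulVec, LinearMap.toMatrix'_mulVec,
      η_Θ, η_θ]

theorem charpolyRev_eq_pow_mul_charpolyRev_of_intertwines {Θ : Matrix ι ι R} {Ψ : Matrix κ κ R}
    {η : (ι → R) →ₗ[R] (κ → R)} {c : R} (hsurj : Function.Surjective η)
    (hcomm : η ∘ₗ Θ.mulVecLin = Ψ.mulVecLin ∘ₗ η)
    (hker : ∀ v ∈ LinearMap.ker η, Θ *ᵥ v = c • v) :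
    Θ.charpolyRev =
      (1 - C c * X) ^ (Fintype.card ι - Fintype.card κ) * Ψ.charpolyRev := by
  nontriviality R
  have hle : Fintype.card κ ≤ Fintype.card ι := by
    simpa using η.finrank_le_finrank_of_surjective hsurj
  obtain ⟨U, H, rfl, rfl⟩ := exists_eq_smul_one_add_mul_of_intertwines hsurj hcomm hker
  rw [charpolyRev, charpolyRev, one_sub_X_smul_map_smul_one_add, one_sub_X_smul_map_smul_one_add,
    Matrix.map_mul, Matrix.map_mul, ← Matrix.smul_mul, ← Matrix.mul_smul,
    det_smul_one_sub_mul_comm_of_card_le _ _ hle]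

end Intertwining

section Determinants

variable {R m : Type*} [CommRing R] [Fintype m] [DecidableEq m]

theorem det_add_vecMulVec_vecMul (A : Matrix m m R) (u v : m → R) :
    (A + vecMulVec u (v ᵥ* A)).det = (1 + v ⬝ᵥ u) * A.det := by
  rw [← vecMulVec_mul, ← det_one_add_replicateCol_mul_replicateRow (ι := Unit), ← vecMulVec_eq,
    ← det_mul, Matrix.add_mul, Matrix.one_mul]

theorem det_fromBlocks_self_swap (A B : Matrix m m R) :
    (fromBlocks A B B A).det = (A + B).det * (A - B).det := by
  have h : fromBlocks 1 1 0 1 * fromBlocks A B B A * fromBlocks 1 (-1) 0 1 =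
      fromBlocks (A + B) 0 B (A - B) := by
    simp [fromBlocks_multiply, add_comm B A, neg_add_eq_sub]
  simpa using congrArg det h

theorem det_fromBlocks_diagonal_add_vecMulVec_antisymmetric (A : Matrix m m R) (u v : m → R) :
    (fromBlocks A 0 0 A + vecMulVec (Sum.elim u (-u)) (Sum.elim v (-v))).det =
      A.det * (A + 2 • vecMulVec u v).det := by
  have h : fromBlocks A 0 0 A + vecMulVec (Sum.elim u (-u)) (Sum.elim v (-v)) =
      fromBlocks (A + vecMulVec u v) (-vecMulVec u v) (-vecMulVec u v) (A + vecMulVec u v) := by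
    ext (i | i) (j | j) <;> simp [vecMulVec_apply]
  rw [h, det_fromBlocks_self_swap]
  congr 2 <;> abel

end Determinants

section Shift

variable {R : Type*} [CommRing R] (n : ℕ)

variable (R) in
/-- The cyclic permutation matrix `σ`, whose nonzero entries are those at `(i, i + 1)` modulo the
size. -/
abbrev cyclicShift : Matrix (Fin n) (Fin n) R := (finRotate n).permMatrix R

variable (R) in
/-- The nilpotent shift, with ones on the superdiagonal: the cyclic shift with its corner entry
removed. -/
def superdiagonalShift : Matrix (Fin n) (Fin n) R :=
  of fun i j ↦ if (j : ℕ) = i + 1 then 1 else 0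

theorem cyclicShift_eq_superdiagonalShift_add_vecMulVec :
    cyclicShift R (n + 1) = superdiagonalShift R (n + 1) +
      vecMulVec (Pi.single (Fin.last n) 1) (Pi.single 0 1) := by
  ext i j
  rcases eq_or_ne i (Fin.last n) with rfl | hi
  · have hj : (j : ℕ) ≠ n + 1 := by lia
    simp [superdiagonalShift, vecMulVec_apply, Pi.single_apply, hj, eq_comm (b := j)]
  · have hij : i + 1 = j ↔ (j : ℕ) = i + 1 := by
      rw [← finRotate_apply, Fin.ext_iff, coe_finRotate_of_ne_last hi, eq_comm]
    simp [superdiagonalShift, vecMulVec_apply, hi, hij]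

theorem det_one_add_smul_superdiagonalShift (t : R) :
    (1 + t • superdiagonalShift R n).det = 1 := by
  rw [det_of_isUpperTriangular]
  · simp [superdiagonalShift]
  · intro i j hij
    have hlt : j < i := hij
    have hne : (j : ℕ) ≠ i + 1 := by lia
    simp [superdiagonalShift, hlt.ne', hne]

theorem geometric_vecMul_one_add_smul_superdiagonalShift (t : R) :
    (fun i : Fin (n + 1) ↦ (-t) ^ (i : ℕ)) ᵥ* (1 + t • superdiagonalShift R (n + 1)) =
      Pi.single 0 1 := by
  ext j
  rw [vecMul_add, vecMul_one, vecMul_smul]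
  cases j using Fin.cases with
  | zero => simp [superdiagonalShift, vecMul, dotProduct]
  | succ k =>
    have hk (i : Fin (n + 1)) : (k : ℕ) = i ↔ i = k.castSucc := by
      simp [Fin.ext_iff, eq_comm]
    simp [superdiagonalShift, vecMul, dotProduct, hk, pow_succ, mul_comm]

theorem det_one_add_smul_cyclicShift_add_vecMulVec (t : R) (u : Fin (n + 1) → R) :
    (1 + t • cyclicShift R (n + 1) + vecMulVec u (Pi.single 0 1)).det =
      1 - (-t) ^ (n + 1) + ∑ i : Fin (n + 1), (-t) ^ (i : ℕ) * u i := by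
  set r : Fin (n + 1) → R := fun i ↦ (-t) ^ (i : ℕ)
  set A := 1 + t • superdiagonalShift R (n + 1)
  have hA : 1 + t • cyclicShift R (n + 1) + vecMulVec u (Pi.single 0 1) =
      A + vecMulVec (t • Pi.single (Fin.last n) 1 + u) (r ᵥ* A) := by
    rw [geometric_vecMul_one_add_smul_superdiagonalShift,
      cyclicShift_eq_superdiagonalShift_add_vecMulVec, smul_add, add_vecMulVec, smul_vecMulVec]
    simp only [A, add_assoc]
  rw [hA, det_add_vecMulVec_vecMul, det_one_add_smul_superdiagonalShift]
  rw [dotProduct_add, dotProduct_smul, dotProduct_single_one, dotProduct, smul_eq_mul]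
  simp only [r, Fin.val_last]
  ring

theorem det_one_add_smul_cyclicShift (t : R) :
    (1 + t • cyclicShift R (n + 1)).det = 1 - (-t) ^ (n + 1) := by
  simpa using det_one_add_smul_cyclicShift_add_vecMulVec n t 0

end Shift

section KneadingMatrix

variable {R : Type*} [CommRing R] {n : ℕ}

/-- The matrix `Θ = (Γ - 1) ω` of the kneading data `a` with period `n + 1`, on two copies of
`Fin (n + 1)`. The matrix `Γ`, whose only nonzero columns are `s = (a, -a)` and `-s` at the first
index of either copy, is written as an outer product. -/
def kneadingMatrix (a : Fin (n + 1) → R) :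
    Matrix (Fin (n + 1) ⊕ Fin (n + 1)) (Fin (n + 1) ⊕ Fin (n + 1)) R :=
  (vecMulVec (Sum.elim a (-a)) (Sum.elim (Pi.single 0 1) (-Pi.single 0 1)) - 1) *
    fromBlocks (cyclicShift R (n + 1)) 0 0 (cyclicShift R (n + 1))

/-- The polynomial `u_p` of the kneading data `a` with period `p = n + 1`. Since the index `i + 1`
of `a` is cyclic, the top term has coefficient `a 0`, which the paper normalizes to `1`. -/
noncomputable def kneadingPolynomial (a : Fin (n + 1) → R) : R[X] :=
  ∑ i : Fin (n + 1), C (a (i + 1)) * (-X) ^ ((i : ℕ) + 1)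

theorem kneadingMatrix_map {S : Type*} [CommRing S] (f : R →+* S) (a : Fin (n + 1) → R) :
    (kneadingMatrix a).map f = kneadingMatrix (f ∘ a) := by
  rw [kneadingMatrix, kneadingMatrix, Matrix.map_mul, Matrix.map_sub _ (map_sub f),
    Matrix.map_one _ (map_zero f) (map_one f)]
  congr 2
  · ext (i | i) (j | j) <;> simp [vecMulVec_apply, Pi.single_apply, apply_ite f]
  · ext (i | i) (j | j) <;> simp [PEquiv.toMatrix_apply, apply_ite f]

theorem det_one_sub_smul_kneadingMatrix (t : R) (a : Fin (n + 1) → R) :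
    (1 - t • kneadingMatrix a).det =
      (1 - (-t) ^ (n + 1)) *
        (1 - (-t) ^ (n + 1) + 2 * ∑ i : Fin (n + 1), a (i + 1) * (-t) ^ ((i : ℕ) + 1)) := by
  set σ := cyclicShift R (n + 1)
  set e : Fin (n + 1) → R := Pi.single 0 1
  set b : Fin (n + 1) → R := fun i ↦ a (i + 1)
  have hσ : σ *ᵥ a = b := by
    rw [permMatrix_mulVec]
    ext i
    simp [b]
  have hrank_one :
      1 - t • (fromBlocks σ 0 0 σ * (vecMulVec (Sum.elim a (-a)) (Sum.elim e (-e)) - 1)) =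
      fromBlocks (1 + t • σ) 0 0 (1 + t • σ) +
        vecMulVec (Sum.elim (-t • b) (-(-t • b))) (Sum.elim e (-e)) := by
    have hωs : fromBlocks σ 0 0 σ *ᵥ Sum.elim a (-a) = Sum.elim b (-b) := by
      simp [fromBlocks_mulVec, mulVec_neg, hσ]
    have hs : Sum.elim (-t • b) (-(-t • b)) = -t • Sum.elim b (-b) := by
      ext (i | i) <;> simp
    have hσσ : fromBlocks (1 + t • σ) 0 0 (1 + t • σ) = 1 + t • fromBlocks σ 0 0 σ := by
      rw [← fromBlocks_one, fromBlocks_smul, fromBlocks_add, smul_zero, add_zero]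
    rw [Matrix.mul_sub, Matrix.mul_one, mul_vecMulVec, hωs, hs, hσσ, smul_vecMulVec]
    module
  rw [kneadingMatrix, ← Matrix.smul_mul, det_one_sub_mul_comm, Matrix.mul_smul, hrank_one,
    det_fromBlocks_diagonal_add_vecMulVec_antisymmetric, ← smul_vecMulVec,
    det_one_add_smul_cyclicShift, det_one_add_smul_cyclicShift_add_vecMulVec, Finset.mul_sum]
  congr 2
  refine Finset.sum_congr rfl fun i _ ↦ ?_
  simp only [b, Pi.smul_apply, smul_eq_mul, nsmul_eq_mul]
  push_cast
  ring

theorem charpolyRev_kneadingMatrix (a : Fin (n + 1) → R) :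
    (kneadingMatrix a).charpolyRev =
      (1 - (-X) ^ (n + 1)) ^ 2 + 2 * (1 - (-X) ^ (n + 1)) * kneadingPolynomial a := by
  rw [charpolyRev, kneadingMatrix_map, det_one_sub_smul_kneadingMatrix, kneadingPolynomial]
  simp only [Function.comp_apply]
  ring

theorem kneadingPolynomial_eq_sum_Ico_add (a : ℕ → R) :
    kneadingPolynomial (fun i : Fin (n + 1) ↦ a i) =
      ∑ k ∈ Finset.Ico 1 (n + 1), C ((-1) ^ k * a k) * X ^ k +
        C ((-1) ^ (n + 1) * a 0) * X ^ (n + 1) := by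
  rw [kneadingPolynomial, Fin.sum_univ_castSucc, Finset.sum_Ico_eq_sum_range,
    ← Fin.sum_univ_eq_sum_range]
  congr 1
  · refine Finset.sum_congr rfl fun i _ ↦ ?_
    have hi : ((i.castSucc + 1 : Fin (n + 1)) : ℕ) = 1 + i := by
      rw [Fin.coeSucc_eq_succ, Fin.val_succ, add_comm]
    rw [hi, Fin.val_castSucc, add_comm (i : ℕ), neg_pow]
    simp only [map_mul, map_pow, map_neg, map_one]
    ring
  · rw [Fin.last_add_one, Fin.val_zero, Fin.val_last, neg_pow]
    simp only [map_mul, map_pow, map_neg, map_one]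
    ring

end KneadingMatrix

/-- The enumeration of two consecutive copies of `Fin p` by `Fin (2 * p)`. -/
def finSumFinEquivTwoMul (p : ℕ) : Fin p ⊕ Fin p ≃ Fin (2 * p) :=
  finSumFinEquiv.trans (finCongr (two_mul p).symm)

theorem submatrix_eq_kneadingMatrix {R : Type*} [CommRing R] {n : ℕ} {a : ℕ → R}
    {s : Fin (2 * (n + 1)) → R}
    (hs : ∀ i, s i = if (i : ℕ) < n + 1 then a i else -a ((i : ℕ) - (n + 1)))
    {ω : Matrix (Fin (2 * (n + 1))) (Fin (2 * (n + 1))) R}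
    (hω : ∀ i j, ω i j =
      if ((i : ℕ) < n + 1 ∧ (j : ℕ) < n + 1 ∧ (j : ℕ) = ((i : ℕ) + 1) % (n + 1)) ∨
         (n + 1 ≤ (i : ℕ) ∧ n + 1 ≤ (j : ℕ) ∧
           (j : ℕ) - (n + 1) = (((i : ℕ) - (n + 1)) + 1) % (n + 1))
      then 1 else 0)
    {Γ : Matrix (Fin (2 * (n + 1))) (Fin (2 * (n + 1))) R}
    (hΓ : ∀ i j, Γ i j = if (j : ℕ) = 0 then s i else if (j : ℕ) = n + 1 then -s i else 0) :
    ((Γ - 1) * ω).submatrix (finSumFinEquivTwoMul (n + 1)) (finSumFinEquivTwoMul (n + 1)) =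
      kneadingMatrix fun i : Fin (n + 1) ↦ a i := by
  set e := finSumFinEquivTwoMul (n + 1)
  set b : Fin (n + 1) → R := fun i ↦ a i
  have e_inl (i) : (e (Sum.inl i) : ℕ) = i := by simp [e, finSumFinEquivTwoMul]
  have e_inr (i) : (e (Sum.inr i) : ℕ) = n + 1 + i := by simp [e, finSumFinEquivTwoMul, add_comm]
  have not_add_le (i : Fin (n + 1)) : ¬ n + 1 + (i : ℕ) ≤ n := by lia
  have hω' : ω.submatrix e e = fromBlocks (cyclicShift R (n + 1)) 0 0 (cyclicShift R (n + 1)) := by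
    have add_one_eq_iff (i j : Fin (n + 1)) : i + 1 = j ↔ (j : ℕ) = (i + 1) % (n + 1) := by
      rw [Fin.ext_iff, Fin.val_add, Fin.val_one', Nat.add_mod_mod, eq_comm]
    ext (i | i) (j | j) <;>
      simp [hω, e_inl, e_inr, PEquiv.toMatrix_apply, add_one_eq_iff, Fin.is_le,
        i.is_le.not_gt, j.is_le.not_gt, not_add_le]
  have hΓ' : Γ.submatrix e e = vecMulVec (Sum.elim b (-b))
      (Sum.elim (Pi.single 0 1) (-Pi.single 0 1)) := by
    ext (i | i) (j | j) <;>
      simp [hΓ, hs, e_inl, e_inr, vecMulVec_apply, Pi.single_apply, b, Fin.is_le, j.is_lt.ne,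
        not_add_le, neg_ite]
  rw [kneadingMatrix, ← hω', ← hΓ', ← submatrix_mul_equiv (e₂ := e), submatrix_sub,
    Pi.sub_apply, Pi.sub_apply, submatrix_one_equiv]

theorem det_one_sub_smul_markov_general {R ι κ : Type*} [CommRing R] [Fintype ι] [Fintype κ]
    [DecidableEq κ] {n : ℕ} {a : Fin (n + 1) → R}
    {e : Fin (n + 1) ⊕ Fin (n + 1) ≃ ι} {Θ : Matrix ι ι R}
    (hΘ : Θ.submatrix e e = kneadingMatrix a) {Ψ : Matrix κ κ R} {η : (ι → R) →ₗ[R] (κ → R)}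
    (hsurj : Function.Surjective η) (hcomm : η ∘ₗ Θ.mulVecLin = Ψ.mulVecLin ∘ₗ η)
    (hneg : ∀ v ∈ LinearMap.ker η, Θ *ᵥ v = -v) :
    (1 + X) ^ (2 * (n + 1) - Fintype.card κ) * (1 - (X : R[X]) • Ψ.map C).det =
      (1 - (-X) ^ (n + 1)) ^ 2 + 2 * (1 - (-X) ^ (n + 1)) * kneadingPolynomial a := by
  classical
  have hcard : Fintype.card ι = 2 * (n + 1) := by
    rw [← Fintype.card_congr e, Fintype.card_sum, Fintype.card_fin, two_mul]
  have hrev : Θ.charpolyRev = (kneadingMatrix a).charpolyRev := by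
    rw [← hΘ, ← reverse_charpoly, ← reverse_charpoly, ← charpoly_reindex e.symm Θ]
    rfl
  have hc : (1 + X : R[X]) = 1 - C (-1) * X := by
    rw [map_neg, map_one, neg_one_mul, sub_neg_eq_add]
  rw [← charpolyRev_kneadingMatrix, ← hrev, ← hcard, hc]
  exact (charpolyRev_eq_pow_mul_charpolyRev_of_intertwines hsurj hcomm
    fun v hv ↦ by rw [hneg v hv, neg_one_smul]).symm

/-- If the Markov matrix `Ψ` is intertwined with `Θ = (Γ - I) ω` by a surjective map `η`
with one-dimensional kernel on which `Θ` acts as `-id`, then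
`(1 + t) det (I - t Ψ) = (1 - (-1)^p t^p)^2 + 2 (1 - (-1)^p t^p) u_p(t)`, i.e.
`det (I - t Ψ) = (1 - (-1)^p t^p)^2 D(t)` with `D` the kneading determinant. -/
theorem det_one_sub_smul_markov (p : ℕ) (hp : 2 ≤ p) (a : ℕ → ℤ)
    (ha : ∀ k < p, a k = -1 ∨ a k = 0 ∨ a k = 1) (ha0 : a 0 = 1)
    (s : Fin (2 * p) → ℚ)
    (hs : ∀ i, s i = if (i : ℕ) < p then (a i : ℚ) else -(a ((i : ℕ) - p) : ℚ))
    (ω : Matrix (Fin (2 * p)) (Fin (2 * p)) ℚ)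
    (hω : ∀ i j, ω i j =
      if ((i : ℕ) < p ∧ (j : ℕ) < p ∧ (j : ℕ) = ((i : ℕ) + 1) % p) ∨
         (p ≤ (i : ℕ) ∧ p ≤ (j : ℕ) ∧ (j : ℕ) - p = (((i : ℕ) - p) + 1) % p)
      then 1 else 0)
    (Γ : Matrix (Fin (2 * p)) (Fin (2 * p)) ℚ)
    (hΓ : ∀ i j, Γ i j = if (j : ℕ) = 0 then s i else if (j : ℕ) = p then -s i else 0)
    (Θ : Matrix (Fin (2 * p)) (Fin (2 * p)) ℚ) (hΘ : Θ = (Γ - 1) * ω)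
    (Ψ : Matrix (Fin (2 * p - 1)) (Fin (2 * p - 1)) ℚ)
    (η : (Fin (2 * p) → ℚ) →ₗ[ℚ] (Fin (2 * p - 1) → ℚ))
    (hsurj : Function.Surjective η)
    (hker : Module.finrank ℚ (LinearMap.ker η) = 1)
    (hcomm : η.comp Θ.mulVecLin = Ψ.mulVecLin.comp η)
    (hneg : ∀ v ∈ LinearMap.ker η, Θ.mulVec v = -v) :
    (1 + X) * Matrix.det
        ((1 : Matrix (Fin (2 * p - 1)) (Fin (2 * p - 1)) ℚ[X]) - (X : ℚ[X]) • Ψ.map C)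
      = (1 - (-1) ^ p * X ^ p) ^ 2
        + 2 * (1 - (-1) ^ p * X ^ p)
          * ((∑ k ∈ Finset.Ico 1 p, C ((-1) ^ k * (a k : ℚ)) * X ^ k)
              + C ((-1 : ℚ) ^ p) * X ^ p) := by
  obtain ⟨n, rfl⟩ : ∃ n, p = n + 1 := Nat.exists_eq_add_of_le' (one_le_two.trans hp)
  subst hΘ
  have hcard : 2 * (n + 1) - (2 * (n + 1) - 1) = 1 := by lia
  have hK := submatrix_eq_kneadingMatrix (a := fun k ↦ (a k : ℚ)) hs hω hΓ
  have h := det_one_sub_smul_markov_general hK hsurj hcomm hneg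
  rwa [Fintype.card_fin, hcard, pow_one,
    kneadingPolynomial_eq_sum_Ico_add fun k ↦ (a k : ℚ), neg_pow, ha0, Int.cast_one, mul_one] at h
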